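/- A normal dually weakly Lindelöf space with a G_delta-diagonal of rank 2 has cardinality at most 2^{aleph_0}. -/

import Mathlib

def star' {X : Type*} (U : Set (Set X)) (x : X) : Set X := ⋃₀ {u ∈ U | x ∈ u}

def st2 {X : Type*} (U : Set (Set X)) (x : X) : Set X :=
  ⋃₀ {u ∈ U | (u ∩ star' U x).Nonempty}

/-- A space is weakly Lindelöf if every open cover has a countable subfamily
with dense union. -/
def WeaklyLindelof (X : Type*) [TopologicalSpace X] : Prop :=
  ∀ 𝒰 : Set (Set X), (∀ u ∈ 𝒰, IsOpen u) → ⋃₀ 𝒰 = Set.univ →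
    ∃ 𝒱 ⊆ 𝒰, 𝒱.Countable ∧ Dense (⋃₀ 𝒱)

/-- A space is dually weakly Lindelöf if every neighbourhood assignment has a
weakly Lindelöf kernel. -/
def DuallyWeaklyLindelof (X : Type*) [TopologicalSpace X] : Prop :=
  ∀ φ : X → Set X, (∀ x, IsOpen (φ x) ∧ x ∈ φ x) →
    ∃ Y : Set X, WeaklyLindelof Y ∧ ⋃ y ∈ Y, φ y = Set.univ

universe uu

open Cardinal Ordinal Set in
/-- Transfinite closure under continuum many operations of countable arity. -/
def clRec {X : Type uu} (F : Set (ℕ × ℕ) → (ℕ → X) → X) (x0 : X) (i : Ordinal.{0}) : Set X :=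
  let S := ⋃ j < i, clRec F x0 j
  {x0} ∪ Set.range fun q : Set (ℕ × ℕ) × (ℕ → S) => F q.1 (fun n => (q.2 n).1)
termination_by i

open Cardinal Ordinal Set in
theorem clRec_card {X : Type uu} (F : Set (ℕ × ℕ) → (ℕ → X) → X) (x0 : X) (i : Ordinal.{0})
    (hi : i < ω₁) : #(clRec F x0 i) ≤ 𝔠 := by
  induction i using WellFoundedLT.induction with
  | ind i IH =>
  have C : #(⋃ j < i, clRec F x0 j) ≤ 𝔠 := by
    apply mk_biUnion_le_of_le_lift _ aleph0_le_continuum _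
    · intro j hj
      exact IH j hj (hj.trans hi)
    · have h2 : i.card ≤ ℵ₁ := by
        have := Ordinal.card_le_card hi.le
        simpa using this
      have h3 := h2.trans aleph_one_le_continuum
      have h4 := Cardinal.lift_le.{uu}.2 h3
      simpa using h4
  rw [clRec]
  refine (mk_union_le _ _).trans (add_le_of_le aleph0_le_continuum ?_ ?_)
  · rw [mk_singleton]
    exact one_lt_aleph0.le.trans aleph0_le_continuum
  · apply mk_range_le.trans
    rw [mk_prod]
    have h1 : #(Set (ℕ × ℕ)) = 𝔠 := by
      rw [mk_set]; simp
    have := @power_le_power_right _ _ ℵ₀ C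
    rw [continuum_power_aleph0] at this
    rw [h1]
    simp only [mk_pi, prod_const, Cardinal.lift_uzero, mk_denumerable, lift_aleph0,
      lift_continuum]
    have h5 := mul_le_mul' (le_refl 𝔠) this
    rw [continuum_mul_self] at h5
    simpa using h5

open Cardinal Ordinal Set in
theorem exists_closed_set {X : Type uu} (F : Set (ℕ × ℕ) → (ℕ → X) → X) (x0 : X) :
    ∃ M : Set X, #M ≤ 𝔠 ∧ x0 ∈ M ∧ ∀ p s, (∀ n, s n ∈ M) → F p s ∈ M := by
  refine ⟨⋃ i < (ω₁ : Ordinal.{0}), clRec F x0 i, ?_, ?_, ?_⟩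
  · apply mk_biUnion_le_of_le_lift _ aleph0_le_continuum _
    · intro j hj
      exact clRec_card F x0 j hj
    · have h4 := Cardinal.lift_le.{uu}.2 aleph_one_le_continuum.{0}
      simpa using h4
  · rw [mem_iUnion₂]
    refine ⟨0, omega_pos 1, ?_⟩
    rw [clRec]
    exact Or.inl rfl
  · intro p s hs
    simp_rw [mem_iUnion₂, exists_prop] at hs ⊢
    choose I hI using hs
    refine ⟨_, Ordinal.lift_iSup_add_one_lt_of_lt_cof ?_ fun n => (hI n).1, ?_⟩
    · simp
    · rw [clRec]
      refine Or.inr ⟨(p, fun n => ⟨s n, ?_⟩), rfl⟩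
      exact mem_iUnion₂.2 ⟨_, Ordinal.lt_iSup_add_one I n, (hI n).2⟩

/-- A partition-relation argument: if all the relations `R n` have only countable
cliques and any two distinct points are related by some `R n`, there are at most
continuum many points. -/
theorem card_le_of_cliques {X : Type uu} (R : ℕ → X → X → Prop)
    (hsymm : ∀ n x y, R n x y → R n y x) (hirr : ∀ n x, ¬ R n x x)
    (hsep : ∀ x y, x ≠ y → ∃ n, R n x y)
    (hcount : ∀ n (S : Set X), S.Pairwise (R n) → S.Countable) :
    Cardinal.mk X ≤ Cardinal.continuum := by
  classical
  rcases isEmpty_or_nonempty X with hX | ⟨⟨x0⟩⟩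
  · simp
  let P : Set (ℕ × ℕ) → (ℕ → X) → X → Prop := fun p s x => ∀ n i, (n, i) ∈ p → R n (s i) x
  let F : Set (ℕ × ℕ) → (ℕ → X) → X := fun p s =>
    if h : ∃ x, P p s x then h.choose else x0
  obtain ⟨M, hM, hx0, hF⟩ := exists_closed_set F x0
  by_cases hall : ∀ x, x ∈ M
  · have : M = Set.univ := Set.eq_univ_of_forall hall
    rw [this, Cardinal.mk_univ] at hM
    exact hM
  push Not at hall
  obtain ⟨x, hx⟩ := hall
  exfalso
  have hmax : ∀ n, ∃ A : Set X, Maximal (fun A : Set X => A ⊆ M ∧ A.Pairwise (R n) ∧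
      ∀ a ∈ A, R n a x) A := by
    intro n
    apply zorn_subset
    intro c hc hchain
    refine ⟨⋃₀ c, ⟨?_, ?_, ?_⟩, fun s hs => Set.subset_sUnion_of_mem hs⟩
    · exact Set.sUnion_subset fun s hs => (hc hs).1
    · exact (Set.pairwise_sUnion hchain.directedOn).2 fun s hs => (hc hs).2.1
    · rintro a ⟨s, hs, ha⟩
      exact (hc hs).2.2 a ha
  choose A hA using hmax
  have hC : ((⋃ n, A n) ∪ {x0}).Countable :=
    (Set.countable_iUnion fun n => hcount n _ (hA n).prop.2.1).union (Set.countable_singleton _)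
  obtain ⟨s, hs⟩ := hC.exists_eq_range ⟨x0, Or.inr rfl⟩
  have hsM : ∀ n, s n ∈ M := by
    intro n
    have : s n ∈ (⋃ n, A n) ∪ {x0} := hs ▸ Set.mem_range_self n
    rcases this with h | h
    · obtain ⟨k, hk⟩ := Set.mem_iUnion.1 h
      exact (hA k).prop.1 hk
    · rw [Set.mem_singleton_iff.1 h]; exact hx0
  let p : Set (ℕ × ℕ) := {q | s q.2 ∈ A q.1}
  have hex : ∃ y, P p s y := ⟨x, fun n i h => (hA n).prop.2.2 _ h⟩
  have hy : P p s (F p s) := by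
    simp only [F, dif_pos hex]
    exact hex.choose_spec
  have hyM : F p s ∈ M := hF p s hsM
  generalize F p s = y at hy hyM
  have hyA : ∀ n, ∀ a ∈ A n, R n a y := by
    intro n a ha
    have : a ∈ Set.range s := hs ▸ Or.inl (Set.mem_iUnion.2 ⟨n, ha⟩)
    obtain ⟨i, rfl⟩ := this
    exact hy n i ha
  have hne : y ≠ x := fun h => hx (h ▸ hyM)
  obtain ⟨n, hn⟩ := hsep y x hne
  have hins : insert y (A n) ⊆ A n := by
    apply (hA n).2 ⟨?_, ?_, ?_⟩ (Set.subset_insert _ _)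
    · exact Set.insert_subset hyM (hA n).prop.1
    · refine (hA n).prop.2.1.insert fun b hb _ => ⟨hsymm _ _ _ (hyA n b hb), hyA n b hb⟩
    · rintro a (rfl | ha)
      · exact hn
      · exact (hA n).prop.2.2 a ha
  exact hirr n y (hyA n y (hins (Set.mem_insert _ _)))

theorem mem_st2_iff {X : Type*} (U : Set (Set X)) (x y : X) :
    y ∈ st2 U x ↔ (star' U y ∩ star' U x).Nonempty := by
  constructor
  · rintro ⟨u, ⟨hu, z, hz, hz'⟩, hy⟩
    exact ⟨z, ⟨u, ⟨hu, hy⟩, hz⟩, hz'⟩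
  · rintro ⟨z, ⟨u, ⟨hu, hy⟩, hz⟩, hz'⟩
    exact ⟨u, ⟨hu, z, hz, hz'⟩, hy⟩

theorem countable_of_sep {X : Type*} [TopologicalSpace X] [T1Space X] [NormalSpace X]
    (hdual : DuallyWeaklyLindelof X) (U : Set (Set X))
    (hopen : ∀ u ∈ U, IsOpen u) (hcov : ⋃₀ U = Set.univ) (S : Set X)
    (hS : S.Pairwise fun x y => y ∉ st2 U x) : S.Countable := by
  classical
  have hself : ∀ x, x ∈ star' U x := by
    intro x
    obtain ⟨u, hu, hxu⟩ : x ∈ ⋃₀ U := hcov ▸ Set.mem_univ x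
    exact ⟨u, ⟨hu, hxu⟩, hxu⟩
  have hso : ∀ x, IsOpen (star' U x) := fun x => isOpen_sUnion fun u hu => hopen u hu.1
  have hdisj : ∀ x ∈ S, ∀ y ∈ S, (star' U y ∩ star' U x).Nonempty → x = y := by
    intro x hx y hy h
    by_contra hne
    exact hS hx hy hne ((mem_st2_iff U x y).2 h)
  -- any subset of `S` is closed
  have hclosed : ∀ T ⊆ S, IsClosed T := by
    intro T hT
    rw [← isOpen_compl_iff, isOpen_iff_forall_mem_open]
    intro z hz
    obtain ⟨u, hu, hzu⟩ : z ∈ ⋃₀ U := hcov ▸ Set.mem_univ z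
    have hsub : (u ∩ T).Subsingleton := by
      rintro a ⟨hau, haT⟩ b ⟨hbu, hbT⟩
      exact hdisj a (hT haT) b (hT hbT) ⟨z, ⟨u, ⟨hu, hbu⟩, hzu⟩, ⟨u, ⟨hu, hau⟩, hzu⟩⟩
    refine ⟨u \ (u ∩ T), ?_, ?_, ?_⟩
    · rintro a ⟨ha, ha'⟩ h; exact ha' ⟨ha, h⟩
    · exact (hopen u hu).sdiff hsub.finite.isClosed
    · exact ⟨hzu, fun h => hz h.2⟩
  have hWo : IsOpen (⋃ x ∈ S, star' U x) := isOpen_biUnion fun x _ => hso x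
  obtain ⟨V, hVo, hSV, hVc⟩ := normal_exists_closure_subset (hclosed S subset_rfl) hWo
    (fun x hx => Set.mem_biUnion hx (hself x))
  -- neighbourhood assignment
  obtain ⟨Y, hY, hker⟩ := hdual (fun x => (S \ {x})ᶜ) (fun x =>
    ⟨(hclosed _ Set.sdiff_subset).isOpen_compl, fun h => h.2 rfl⟩)
  have hSY : S ⊆ Y := by
    intro x hx
    have : x ∈ ⋃ y ∈ Y, (S \ {y})ᶜ := hker ▸ Set.mem_univ x
    obtain ⟨y, hy, hxy⟩ := Set.mem_iUnion₂.1 this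
    have : x = y := by
      by_contra h
      exact hxy ⟨hx, h⟩
    exact this ▸ hy
  obtain ⟨𝒱, h𝒱, h𝒱c, h𝒱d⟩ := hY
    {w | IsOpen w ∧ {x ∈ S | ∃ z : Y, z ∈ w ∧ (z : X) ∈ V ∧ (z : X) ∈ star' U x}.Subsingleton}
    (fun w hw => hw.1) (by
      apply Set.eq_univ_of_forall
      intro z
      by_cases hz : (z : X) ∈ closure V
      · obtain ⟨x, hx, hzx⟩ := Set.mem_iUnion₂.1 (hVc hz)
        refine ⟨(Subtype.val : Y → X) ⁻¹' (star' U x), ⟨(hso x).preimage continuous_subtype_val, ?_⟩, hzx⟩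
        rintro a ⟨ha, t, ht, -, hta⟩ b ⟨hb, t', ht', -, htb⟩
        have h1 := hdisj x hx a ha ⟨t, hta, ht⟩
        have h2 := hdisj x hx b hb ⟨t', htb, ht'⟩
        exact h1.symm.trans h2
      · refine ⟨(Subtype.val : Y → X) ⁻¹' (closure V)ᶜ,
          ⟨isClosed_closure.isOpen_compl.preimage continuous_subtype_val, ?_⟩, hz⟩
        rintro a ⟨ha, t, ht, htV, hta⟩
        exact absurd (subset_closure htV) ht)
  refine Set.Countable.mono ?_ (h𝒱c.biUnion (t := fun (w : Set Y) _ =>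
    {x ∈ S | ∃ z : Y, z ∈ w ∧ (z : X) ∈ V ∧ (z : X) ∈ star' U x})
    fun w hw => (h𝒱 hw).2.finite.countable)
  intro x hx
  have ho : IsOpen ((↑) ⁻¹' (V ∩ star' U x) : Set Y) :=
    (hVo.inter (hso x)).preimage continuous_subtype_val
  obtain ⟨z, hz, w, hw, hzw⟩ := h𝒱d.inter_open_nonempty _ ho ⟨⟨x, hSY hx⟩, hSV hx, hself x⟩
  exact Set.mem_biUnion hw ⟨hx, z, hzw, hz.1, hz.2⟩

/-- A normal dually weakly Lindelöf space with a G_δ-diagonal of rank 2 has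
cardinality at most `2^ℵ₀`. -/
theorem stmt4 {X : Type*} [TopologicalSpace X] [T1Space X] [NormalSpace X]
    (hdual : DuallyWeaklyLindelof X)
    (U : ℕ → Set (Set X))
    (hopen : ∀ k, ∀ u ∈ U k, IsOpen u)
    (hcov : ∀ k, ⋃₀ (U k) = Set.univ)
    (hrank2 : ∀ x : X, ⋂ k, st2 (U k) x = {x}) :
    Cardinal.mk X ≤ 2 ^ Cardinal.aleph0 := by
  rw [Cardinal.two_power_aleph0]
  refine card_le_of_cliques (fun n x y => y ∉ st2 (U n) x) ?_ ?_ ?_ ?_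
  · intro n x y h h'
    rw [mem_st2_iff] at h h'
    rw [Set.inter_comm] at h'
    exact h h'
  · intro n x h
    have : x ∈ ⋂ k, st2 (U k) x := by rw [hrank2]; rfl
    exact h (Set.mem_iInter.1 this n)
  · intro x y hxy
    by_contra hcon
    push Not at hcon
    have : y ∈ ⋂ k, st2 (U k) x := Set.mem_iInter.2 hcon
    rw [hrank2] at this
    exact hxy this.symm
  · intro n S hS
    exact countable_of_sep hdual (U n) (hopen n) (hcov n) S hS
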